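/- Let W be a finite type, p : W → ℝ a probability distribution (p(w) ≥ 0, Σ_{w∈W} p(w) = 1), and S ⊆ W a nonempty subset with p(w) > 0 for every w ∈ S and p(w) ≥ p(w') for every w ∈ S, w' ∉ S. Let g = Σ_{w∈S} p(w), let p*(w) = p(w)/g for w ∈ S and p*(w) = 0 otherwise, and let d = H(p) − H(p*). Then for every real temperature T > 0, exp(−d/T) ≤ g^{1/T}. -/

import Mathlib

/-- Entropy (natural log), with the convention `0 * log 0 = 0`
(which holds automatically since `Real.log 0 = 0`). -/
noncomputable def entropy {W : Type*} [Fintype W] (q : W → ℝ) : ℝ :=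
  -∑ w, q w * Real.log (q w)

/-!
Splitting off the normalizing constant gives `H(p*) = (1 / g) ∑_{w ∈ S} p w log (1 / p w) + log g`,
so `-d ≤ log g` as soon as the mean surprisal over `S` is at most `H(p)`, the mean surprisal over
all of `W`. This holds because `S` consists of the most likely, hence least surprising, tokens.
-/

open Finset Real

section WeightedMeans

variable {ι R : Type*} [CommSemiring R] [PartialOrder R] [IsOrderedRing R] {w f : ι → R}

theorem sum_mul_mul_sum_le_sum_mul_sum_mul {s t : Finset ι} (hs : ∀ i ∈ s, 0 ≤ w i)
    (ht : ∀ j ∈ t, 0 ≤ w j) (hf : ∀ i ∈ s, ∀ j ∈ t, w i ≠ 0 → w j ≠ 0 → f i ≤ f j) :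
    (∑ i ∈ s, w i * f i) * ∑ j ∈ t, w j ≤ (∑ i ∈ s, w i) * ∑ j ∈ t, w j * f j := by
  rw [sum_mul_sum, sum_mul_sum]
  refine sum_le_sum fun i hi ↦ sum_le_sum fun j hj ↦ ?_
  by_cases hwi : w i = 0
  · simp [hwi]
  by_cases hwj : w j = 0
  · simp [hwj]
  calc
    w i * f i * w j = w i * w j * f i := by ring
    _ ≤ w i * w j * f j :=
      mul_le_mul_of_nonneg_left (hf i hi j hj hwi hwj) (mul_nonneg (hs i hi) (ht j hj))
    _ = w i * (w j * f j) := by ring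

theorem sum_mul_mul_sum_univ_le_sum_mul_sum_univ_mul [Fintype ι] {s : Finset ι}
    (hw : ∀ i, 0 ≤ w i) (hf : ∀ i ∈ s, ∀ j ∉ s, w i ≠ 0 → w j ≠ 0 → f i ≤ f j) :
    (∑ i ∈ s, w i * f i) * ∑ i, w i ≤ (∑ i ∈ s, w i) * ∑ i, w i * f i := by
  classical
  have hcompl : (∑ i ∈ s, w i * f i) * ∑ j ∈ sᶜ, w j ≤ (∑ i ∈ s, w i) * ∑ j ∈ sᶜ, w j * f j :=
    sum_mul_mul_sum_le_sum_mul_sum_mul (fun i _ ↦ hw i) (fun j _ ↦ hw j)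
      fun i hi j hj ↦ hf i hi j (mem_compl.mp hj)
  calc
    (∑ i ∈ s, w i * f i) * ∑ i, w i
        = (∑ i ∈ s, w i) * ∑ i ∈ s, w i * f i + (∑ i ∈ s, w i * f i) * ∑ j ∈ sᶜ, w j := by
      rw [← sum_add_sum_compl s w, mul_add, mul_comm (∑ i ∈ s, w i)]
    _ ≤ (∑ i ∈ s, w i) * ∑ i ∈ s, w i * f i + (∑ i ∈ s, w i) * ∑ j ∈ sᶜ, w j * f j := by
      gcongr
    _ = (∑ i ∈ s, w i) * ∑ i, w i * f i := by rw [← mul_add, sum_add_sum_compl]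

end WeightedMeans

section Entropy

variable {W : Type*} [Fintype W] {p : W → ℝ} {S : Finset W}

theorem entropy_eq_sum_negMulLog (q : W → ℝ) : entropy q = ∑ w, negMulLog (q w) := by
  simp only [entropy, negMulLog_eq_neg, sum_neg_distrib]

theorem sum_negMulLog_le_sum_mul_entropy (hp : ∀ w, 0 ≤ p w) (hsum : ∑ w, p w = 1)
    (htop : ∀ w ∈ S, ∀ w' ∉ S, p w' ≤ p w) :
    ∑ w ∈ S, negMulLog (p w) ≤ (∑ w ∈ S, p w) * entropy p := by
  have hsurprisal : ∀ w ∈ S, ∀ w' ∉ S, p w ≠ 0 → p w' ≠ 0 → -log (p w) ≤ -log (p w') :=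
    fun w hw w' hw' _ hpw' ↦
      neg_le_neg (log_le_log ((hp w').lt_of_ne' hpw') (htop w hw w' hw'))
  simpa only [entropy_eq_sum_negMulLog, negMulLog, neg_mul, mul_neg, hsum, mul_one] using
    sum_mul_mul_sum_univ_le_sum_mul_sum_univ_mul hp hsurprisal

/-- The distribution `p*` obtained from `p` by conditioning on `S`: weights outside `S` are set to
`0` and those in `S` are divided by their sum. It vanishes identically when that sum is `0`. -/
noncomputable def renormalize {W : Type*} [DecidableEq W] (p : W → ℝ) (S : Finset W) (w : W) : ℝ :=
  if w ∈ S then p w / ∑ v ∈ S, p v else 0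

variable [DecidableEq W]

theorem entropy_renormalize (hg : ∑ w ∈ S, p w ≠ 0) :
    entropy (renormalize p S) =
      (∑ w ∈ S, negMulLog (p w)) / (∑ w ∈ S, p w) + log (∑ w ∈ S, p w) := by
  set g := ∑ w ∈ S, p w with hg_def
  have hterm (w : W) : negMulLog (p w / g) = negMulLog (p w) / g + p w * (log g / g) := by
    rw [div_eq_mul_inv, negMulLog_mul, negMulLog, negMulLog, log_inv]
    ring
  calc
    entropy (renormalize p S) = ∑ w ∈ S, negMulLog (p w / g) := by
      simp [entropy_eq_sum_negMulLog, renormalize, apply_ite negMulLog, ← hg_def]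
    _ = (∑ w ∈ S, negMulLog (p w)) / g + g * (log g / g) := by
      simp only [hterm, sum_add_distrib, ← sum_div, ← sum_mul, ← hg_def]
    _ = (∑ w ∈ S, negMulLog (p w)) / g + log g := by rw [mul_div_cancel₀ _ hg]

theorem entropy_renormalize_le (hp : ∀ w, 0 ≤ p w) (hsum : ∑ w, p w = 1)
    (htop : ∀ w ∈ S, ∀ w' ∉ S, p w' ≤ p w) (hg : 0 < ∑ w ∈ S, p w) :
    entropy (renormalize p S) ≤ entropy p + log (∑ w ∈ S, p w) := by
  rw [entropy_renormalize hg.ne']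
  gcongr
  exact (div_le_iff₀' hg).mpr (sum_negMulLog_le_sum_mul_entropy hp hsum htop)

end Entropy

/-- Theorem 1 of the paper: if the residual entropy `d = H(p) - H(p*)` is
computed exactly from the ideal top-token threshold `g`, then the REAL-sampling
threshold `exp(-d/T)` is at most `g^(1/T)` for every temperature `T > 0`. -/
theorem real_sampling_threshold_le
    {W : Type*} [Fintype W] [DecidableEq W] (p : W → ℝ)
    (hp : ∀ w, 0 ≤ p w) (hsum : ∑ w, p w = 1)
    (S : Finset W) (hS : S.Nonempty)
    (hpos : ∀ w ∈ S, 0 < p w)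
    (htop : ∀ w ∈ S, ∀ w' ∉ S, p w' ≤ p w)
    (g : ℝ) (hg : g = ∑ w ∈ S, p w)
    (pStar : W → ℝ) (hpStar : ∀ w, pStar w = if w ∈ S then p w / g else 0)
    (d : ℝ) (hd : d = entropy p - entropy pStar)
    (T : ℝ) (hT : 0 < T) :
    Real.exp (-d / T) ≤ g ^ (1 / T) := by
  subst hg
  obtain rfl : pStar = renormalize p S := funext hpStar
  have hg_pos : 0 < ∑ w ∈ S, p w := sum_pos hpos hS
  have hd_le : -d ≤ log (∑ w ∈ S, p w) := by
    linarith [entropy_renormalize_le hp hsum htop hg_pos]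
  calc
    exp (-d / T) ≤ exp (log (∑ w ∈ S, p w) / T) := by gcongr
    _ = (∑ w ∈ S, p w) ^ (1 / T) := by rw [rpow_def_of_pos hg_pos, mul_one_div]
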